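/- Let f and g be two C¹-diffeomorphisms of S¹ with the same irrational rotation number α, both having dense orbits. Assume that for any ε > 0 there exist a C¹-diffeomorphism g̃ that is ε-C¹-close to g, an integer n ∈ ℕ, and adapted orbit segments {x, f(x), …, fⁿ(x)} of f and {y, g̃(y), …, g̃ⁿ(y)} of g̃ that are similarly ordered and have the same initial and final ratios. Then there exists a sequence of C¹-diffeomorphisms h_n of S¹ such that h_n ∘ f ∘ h_n⁻¹ converges to g in the C¹ topology. -/

import Mathlib

open Set Filter

/-- `inArc a w b` : the point `w` (mod 1) lies strictly inside the positively oriented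
open arc of the circle `ℝ/ℤ` from `a` (mod 1) to `b` (mod 1). -/
def inArc (a w b : ℝ) : Prop :=
  0 < Int.fract (w - a) ∧ Int.fract (w - a) < Int.fract (b - a)

/-- A lift of an orientation-preserving `C¹`-diffeomorphism of the circle `S¹ = ℝ/ℤ`:
a `C¹` map `F : ℝ → ℝ` with `F (x+1) = F x + 1` and `F' > 0` everywhere. -/
structure CircleDiffeo where
  toFun : ℝ → ℝ
  contDiff : ContDiff ℝ 1 toFun
  deriv_pos : ∀ x : ℝ, 0 < deriv toFun x
  commute_translation : ∀ x : ℝ, toFun (x + 1) = toFun x + 1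

/-- `f` has rotation number (a lift of) `α`. -/
def hasRotationNumber (f : CircleDiffeo) (α : ℝ) : Prop :=
  Tendsto (fun n : ℕ => f.toFun^[n] 0 / (n : ℝ)) atTop (nhds α)

/-- The `C¹`-distance between (lifts of) circle maps : sup distance between the maps
plus sup distance between the derivatives (computed over a fundamental domain). -/
noncomputable def distC1 (f g : ℝ → ℝ) : ℝ :=
  (⨆ x : Icc (0:ℝ) 1, |f x.1 - g x.1|) + (⨆ x : Icc (0:ℝ) 1, |deriv f x.1 - deriv g x.1|)

/-- The orbit segment `x, F x, …, F^[n] x` is *adapted*, with final basic interval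
`[F^[i] x, F^[j] x]` and initial basic interval `[F^[n-j] x, F^[n-i] x]` (all viewed
on the circle `ℝ/ℤ`). -/
structure IsAdaptedSeg (F : ℝ → ℝ) (x : ℝ) (n i j : ℕ) : Prop where
  hi1 : 1 ≤ i
  hi2 : i ≤ n - 1
  hj1 : 1 ≤ j
  hj2 : j ≤ n - 1
  x_mem : inArc (F^[n - j] x) x (F^[n - i] x)
  x_only : ∀ k ≤ n, inArc (F^[n - j] x) (F^[k] x) (F^[n - i] x) → Int.fract (F^[k] x - x) = 0
  fn_mem : inArc (F^[i] x) (F^[n] x) (F^[j] x)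
  fn_only : ∀ k ≤ n, inArc (F^[i] x) (F^[k] x) (F^[j] x) → Int.fract (F^[k] x - F^[n] x) = 0
  adapted : i + j ≠ n - 1

/-- The initial ratio `R₀ = ℓ([a,x])/ℓ([x,b])` of an adapted orbit segment,
where `a = F^[n-j] x` and `b = F^[n-i] x`. -/
noncomputable def initialRatio (F : ℝ → ℝ) (x : ℝ) (n i j : ℕ) : ℝ :=
  Int.fract (x - F^[n - j] x) / Int.fract (F^[n - i] x - x)

/-- The final ratio `Rₙ = ℓ([c,Fⁿx])/ℓ([Fⁿx,d])` of an adapted orbit segment,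
where `c = F^[i] x` and `d = F^[j] x`. -/
noncomputable def finalRatio (F : ℝ → ℝ) (x : ℝ) (n i j : ℕ) : ℝ :=
  Int.fract (F^[n] x - F^[i] x) / Int.fract (F^[j] x - F^[n] x)

/-- Two finite sequences of points of the circle are similarly ordered: some
orientation-preserving circle homeomorphism (given by its lift `φ`) maps one to the other. -/
def SimilarlyOrdered (p q : ℕ → ℝ) (n : ℕ) : Prop :=
  ∃ φ : ℝ → ℝ, Continuous φ ∧ StrictMono φ ∧ (∀ z : ℝ, φ (z + 1) = φ z + 1) ∧
    ∀ k ≤ n, Int.fract (φ (p k) - q k) = 0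

/-- The (closed) circle arc from `u` to `v` contains no point of the orbit segment
`x, …, F^[n] x` in its interior: it is contained in the closure of a connected
component of the complement of the orbit segment. -/
def NoSegPointInside (F : ℝ → ℝ) (x : ℝ) (n : ℕ) (u v : ℝ) : Prop :=
  ∀ k ≤ n, ¬ inArc u (F^[k] x) v

/-- Every orbit of (the circle map induced by) `F` is dense in the circle. -/
def DenseOrbits (F : ℝ → ℝ) : Prop :=
  ∀ x : ℝ, Dense {z : ℝ | ∃ n : ℕ, Int.fract (F^[n] x - z) = 0}

/-!
An irrational rotation number forces subexponential growth of derivatives: a diffeomorphism `f` is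
semiconjugate to the translation by `α`, so the first iterates of an arc with short image are
disjoint and their lengths add up to at most a constant. Hence Birkhoff sums of `log f'` at nearby
points stay close, then, as the orbits of the rotation are uniformly dense, at any two points; since
`fⁿ` has derivative `1` somewhere, `log (fⁿ)'` is `o(n)` uniformly.

As the orbits of `g` are dense, there is also a continuous monotone `ψ` with `ψ ∘ f = g ∘ ψ`. If a
diffeomorphism `k` is close to `ψ`, so is each `g⁻ʲ ∘ k ∘ fʲ`, because `g⁻ʲ ∘ ψ ∘ fʲ = ψ`. Averaging
these diffeomorphisms over `j ∈ ℤ` with weights `exp (-η |j|)`, whose sums of derivatives converge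
by the subexponential growth, yields a diffeomorphism still close to `ψ`. Replacing it by its
composition with `f` only shifts the index `j`, which costs a factor `exp (± η)`, so that it
conjugates `f` to a diffeomorphism `C¹`-close to `g`.
-/

theorem uniformContinuous_of_periodic {β : Type*} [UniformSpace β] {φ : ℝ → β} {c : ℝ}
    (hc : 0 < c) (hφ : Continuous φ) (hp : Function.Periodic φ c) : UniformContinuous φ := by
  have : Fact (0 < c) := ⟨hc⟩
  have hlift : UniformContinuous hp.lift :=
    CompactSpace.uniformContinuous_of_continuous (continuous_coinduced_dom.mpr hφ)
  have hcoe : UniformContinuous ((↑) : ℝ → AddCircle c) :=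
    uniformContinuous_of_continuousAt_zero (QuotientAddGroup.mk' (AddSubgroup.zmultiples c))
      (AddCircle.continuous_mk' c).continuousAt
  exact hlift.comp hcoe

theorem exists_abs_le_of_periodic {φ : ℝ → ℝ} {c : ℝ} (hc : c ≠ 0) (hφ : Continuous φ)
    (hp : Function.Periodic φ c) : ∃ C > 0, ∀ x, |φ x| ≤ C := by
  obtain ⟨C, hC, h⟩ := (hp.isBounded_of_continuous hc hφ).exists_pos_norm_le
  exact ⟨C, hC, fun x => h _ (mem_range_self x)⟩

theorem exists_abs_sub_le_add_mul_of_periodic {φ : ℝ → ℝ} {c : ℝ} (hc : 0 < c)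
    (hφ : Continuous φ) (hp : Function.Periodic φ c) {δ : ℝ} (hδ : 0 < δ) :
    ∃ A > 0, ∀ u v, |φ u - φ v| ≤ δ + A * |u - v| := by
  obtain ⟨C, hC0, hC⟩ := exists_abs_le_of_periodic hc.ne' hφ hp
  obtain ⟨r, hr, hu⟩ :=
    Metric.uniformContinuous_iff.1 (uniformContinuous_of_periodic hc hφ hp) δ hδ
  refine ⟨2 * C / r, by positivity, fun u v => ?_⟩
  rcases lt_or_ge |u - v| r with h | h
  · have h_small : |φ u - φ v| < δ := hu h
    have : 0 ≤ 2 * C / r * |u - v| := by positivity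
    linarith
  · have h_sub : |φ u - φ v| ≤ 2 * C := (abs_sub _ _).trans (by linarith [hC u, hC v])
    have h_large : 2 * C ≤ 2 * C / r * |u - v| := by
      rw [div_mul_eq_mul_div, le_div_iff₀ hr]
      gcongr
    linarith

theorem deg1Lift_sub_mem_Icc (ψ : CircleDeg1Lift) {x y : ℝ} (hxy : x ≤ y) (hyx : y ≤ x + 1) :
    ψ y - ψ x ∈ Icc (0 : ℝ) 1 :=
  ⟨sub_nonneg.2 (ψ.monotone hxy), by linarith [ψ.monotone hyx, ψ.map_add_one x]⟩

theorem abs_deg1Lift_sub_le_of_forall_Icc {φ ψ : CircleDeg1Lift} {τ : ℝ}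
    (h : ∀ x ∈ Icc (0 : ℝ) 1, |φ x - ψ x| ≤ τ) (x : ℝ) : |φ x - ψ x| ≤ τ := by
  have h_fract := h (Int.fract x) ⟨Int.fract_nonneg x, (Int.fract_lt_one x).le⟩
  rw [← Int.fract_add_floor x, φ.map_add_int, ψ.map_add_int, add_sub_add_right_eq_sub]
  exact h_fract

theorem periodic_deg1Lift_sub_self (ψ : CircleDeg1Lift) :
    Function.Periodic (fun x => ψ x - x) 1 := fun x => by
  simp only [ψ.map_add_one, add_sub_add_right_eq_sub]

theorem uniformContinuous_deg1Lift {ψ : CircleDeg1Lift} (hψ : Continuous ψ) :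
    UniformContinuous ψ := by
  have h := (uniformContinuous_of_periodic one_pos (hψ.sub continuous_id)
    (periodic_deg1Lift_sub_self ψ)).add uniformContinuous_id
  simpa using h

section Rotation

variable {f ψ : CircleDeg1Lift} {α : ℝ}

theorem exists_pos_le_abs_mul_sub_of_irrational (hα : Irrational α) (L : ℕ) :
    ∃ η > 0, ∀ k : ℤ, k ≠ 0 → |k| < L → ∀ m : ℤ, η ≤ |k * α - m| := by
  have h_small : ∀ᶠ η in nhdsWithin (0 : ℝ) (Ioi 0), ∀ k ∈ Finset.Ioo (-L : ℤ) L,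
      k ≠ 0 → η ≤ |k * α - round (k * α)| := by
    refine (Filter.eventually_all_finset _).2 fun k _ => eventually_imp_distrib_left.2 fun hk => ?_
    have h_irr : Irrational (k * α - round (k * α)) := (hα.intCast_mul hk).sub_intCast _
    exact eventually_nhdsWithin_of_eventually_nhds
      (eventually_le_nhds (abs_pos.2 h_irr.ne_zero))
  obtain ⟨η, hη, hη0⟩ := (h_small.and self_mem_nhdsWithin).exists
  exact ⟨η, hη0, fun k hk hkL m =>
    (hη k (Finset.mem_Ioo.2 (abs_lt.1 hkL)) hk).trans (round_le _ m)⟩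

theorem exists_forall_exists_abs_mul_sub_lt_of_irrational (hα : Irrational α) {η : ℝ}
    (hη : 0 < η) : ∃ M : ℕ, ∀ t : ℝ, ∃ m ≤ M, ∃ p : ℤ, |m * α + p - t| < η := by
  have h_dense : DenseRange fun m : ℕ => m • (α : UnitAddCircle) :=
    denseRange_zsmul_iff_nsmul.1 (AddCircle.denseRange_zsmul_coe_iff.2 (by rwa [div_one]))
  obtain ⟨T, hT⟩ := isCompact_univ.elim_finite_subcover
    (fun m : ℕ => Metric.ball (m • (α : UnitAddCircle)) η) (fun _ => Metric.isOpen_ball)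
    fun t _ => by
      obtain ⟨m, hm⟩ := h_dense.exists_dist_lt t hη
      exact mem_iUnion.2 ⟨m, hm⟩
  refine ⟨T.sup id, fun t => ?_⟩
  obtain ⟨m, hm, ht⟩ := mem_iUnion₂.1 (hT (mem_univ (t : UnitAddCircle)))
  refine ⟨m, Finset.le_sup (f := id) hm, round (t - m * α), ?_⟩
  have h_norm : ‖((t - m * α : ℝ) : UnitAddCircle)‖ < η := by
    rw [← nsmul_eq_mul]
    simpa [dist_eq_norm] using ht
  rw [UnitAddCircle.norm_eq] at h_norm
  rwa [← abs_neg, show -(m * α + round (t - m * α) - t) = t - m * α - round (t - m * α) by ring]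

theorem sum_sub_le_of_pairwiseDisjoint_Ioo {ι : Type*} {s : Finset ι} {a b : ι → ℝ} {c d : ℝ}
    (hcd : c ≤ d) (hsub : ∀ i ∈ s, Ioo (a i) (b i) ⊆ Icc c d)
    (hdisj : (s : Set ι).PairwiseDisjoint fun i => Ioo (a i) (b i)) :
    ∑ i ∈ s, (b i - a i) ≤ d - c :=
  calc ∑ i ∈ s, (b i - a i)
    _ ≤ ∑ i ∈ s, MeasureTheory.volume.real (Ioo (a i) (b i)) :=
      Finset.sum_le_sum fun _ _ => (le_max_left _ _).trans_eq Real.volume_real_Ioo.symm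
    _ = MeasureTheory.volume.real (⋃ i ∈ s, Ioo (a i) (b i)) :=
      (MeasureTheory.measureReal_biUnion_finset hdisj (fun _ _ => measurableSet_Ioo)
        fun _ _ => measure_Ioo_lt_top.ne).symm
    _ ≤ MeasureTheory.volume.real (Icc c d) :=
      MeasureTheory.measureReal_mono (iUnion₂_subset hsub) isCompact_Icc.measure_ne_top
    _ = d - c := Real.volume_real_Icc_of_le hcd

theorem semiconj_translation_iterate (h : Function.Semiconj ψ f (· + α)) (n : ℕ) (x : ℝ) :
    ψ (f^[n] x) = ψ x + n * α := by
  simpa using h.iterate_right n x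

-- The arcs `f^[i] (z, z')` are pairwise disjoint on the circle, because `ψ` maps them into the
-- arcs `ψ z + i α + [0, η)`, which are.
theorem sum_iterate_sub_le_two (h : Function.Semiconj ψ f (· + α)) {L : ℕ} {η : ℝ}
    (hη : ∀ k : ℤ, k ≠ 0 → |k| < L → ∀ m : ℤ, η ≤ |k * α - m|) {z z' : ℝ}
    (hz1 : z' ≤ z + 1) (hψ : ψ z' - ψ z < η) :
    ∑ i ∈ Finset.range L, (f^[i] z' - f^[i] z) ≤ 2 := by
  have h_len (i : ℕ) : f^[i] z' ≤ f^[i] z + 1 := by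
    simpa [CircleDeg1Lift.coe_pow] using (f ^ i).monotone hz1
  have h_image (i : ℕ) {t : ℝ} (ht : t ∈ Ioo (f^[i] z - ⌊f^[i] z⌋) (f^[i] z' - ⌊f^[i] z⌋)) :
      ψ t - (ψ z + i * α - ⌊f^[i] z⌋) ∈ Icc 0 (ψ z' - ψ z) := by
    have h_lower := ψ.monotone ht.1.le
    have h_upper := ψ.monotone ht.2.le
    rw [ψ.map_sub_int, semiconj_translation_iterate h] at h_lower h_upper
    constructor <;> linarith
  have h_disj : ((Finset.range L : Finset ℕ) : Set ℕ).PairwiseDisjoint fun i =>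
      Ioo (f^[i] z - ⌊f^[i] z⌋) (f^[i] z' - ⌊f^[i] z⌋) := by
    refine fun i hi j hj hij => Set.disjoint_left.2 fun t hti htj => ?_
    have hi_image := h_image i hti
    have hj_image := h_image j htj
    have h_far := hη (i - j) (sub_ne_zero.2 (Nat.cast_injective.ne hij))
      (by simp only [Finset.coe_range, mem_Iio] at hi hj; rw [abs_lt]; omega)
      (⌊f^[i] z⌋ - ⌊f^[j] z⌋)
    push_cast at h_far
    refine (hψ.trans_le h_far).not_ge (abs_le.2 ⟨?_, ?_⟩) <;>
      linarith [hi_image.1, hi_image.2, hj_image.1, hj_image.2]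
  have h_sub (i : ℕ) : Ioo (f^[i] z - ⌊f^[i] z⌋) (f^[i] z' - ⌊f^[i] z⌋) ⊆ Icc 0 2 :=
    fun t ht => ⟨(Int.fract_nonneg _).trans ht.1.le, by
      linarith [ht.2, h_len i, Int.lt_floor_add_one (f^[i] z)]⟩
  have h_sum := sum_sub_le_of_pairwiseDisjoint_Ioo two_pos.le (fun i _ => h_sub i) h_disj
  simpa only [sub_sub_sub_cancel_right, sub_zero] using h_sum

theorem sum_iterate_sub_le (h : Function.Semiconj ψ f (· + α)) {L : ℕ} (hL : 0 < L) {η : ℝ}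
    (hη : ∀ k : ℤ, k ≠ 0 → |k| < L → ∀ m : ℤ, η ≤ |k * α - m|) {z z' : ℝ} (hz : z ≤ z')
    (hz1 : z' ≤ z + 1) (hψ : ψ z' - ψ z < η) (n : ℕ) :
    ∑ i ∈ Finset.range n, (f^[i] z' - f^[i] z) ≤ 2 * (n / L + 1) := by
  have h_blocks (q : ℕ) : ∑ i ∈ Finset.range (L * q), (f^[i] z' - f^[i] z) ≤ 2 * q := by
    induction q with
    | zero => simp
    | succ q ih =>
      have h_block := sum_iterate_sub_le_two h hη
        (by simpa [CircleDeg1Lift.coe_pow] using (f ^ (L * q)).monotone hz1)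
        (by simpa [semiconj_translation_iterate h] using hψ)
      simp only [← Function.iterate_add_apply] at h_block
      rw [Nat.mul_succ, Finset.sum_range_add]
      simp only [add_comm (L * q)]
      push_cast
      linarith
  calc ∑ i ∈ Finset.range n, (f^[i] z' - f^[i] z)
    _ ≤ ∑ i ∈ Finset.range (L * (n / L + 1)), (f^[i] z' - f^[i] z) :=
      Finset.sum_le_sum_of_subset_of_nonneg
        (Finset.range_subset_range.2 (Nat.lt_mul_div_succ n hL).le)
        fun i _ _ => sub_nonneg.2 (f.monotone.iterate i hz)
    _ ≤ 2 * ((n / L + 1 : ℕ) : ℝ) := h_blocks _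
    _ ≤ 2 * (n / L + 1) := by
      push_cast
      gcongr
      exact Nat.cast_div_le

section BirkhoffSum

variable {φ : ℝ → ℝ}

theorem abs_birkhoffSum_sub_le_of_le (h : Function.Semiconj ψ f (· + α)) {δ A : ℝ} (hA : 0 ≤ A)
    (hφ : ∀ u v, |φ u - φ v| ≤ δ + A * |u - v|) {L : ℕ} (hL : 0 < L) {η : ℝ} (hη1 : η ≤ 1)
    (hη : ∀ k : ℤ, k ≠ 0 → |k| < L → ∀ m : ℤ, η ≤ |k * α - m|) {z z' : ℝ} (hz : z ≤ z')
    (hψ : ψ z' - ψ z < η) (n : ℕ) :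
    |birkhoffSum f φ n z' - birkhoffSum f φ n z| ≤ n * δ + A * (2 * (n / L + 1)) := by
  have hz1 : z' ≤ z + 1 := by
    by_contra! hlt
    linarith [ψ.monotone hlt.le, ψ.map_add_one z]
  calc |birkhoffSum f φ n z' - birkhoffSum f φ n z|
    _ ≤ ∑ i ∈ Finset.range n, |φ (f^[i] z') - φ (f^[i] z)| := by
      rw [birkhoffSum, birkhoffSum, ← Finset.sum_sub_distrib]
      exact Finset.abs_sum_le_sum_abs _ _
    _ ≤ ∑ i ∈ Finset.range n, (δ + A * (f^[i] z' - f^[i] z)) :=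
      Finset.sum_le_sum fun i _ => by
        simpa [abs_of_nonneg (sub_nonneg.2 (f.monotone.iterate i hz))] using
          hφ (f^[i] z') (f^[i] z)
    _ = n * δ + A * ∑ i ∈ Finset.range n, (f^[i] z' - f^[i] z) := by
      rw [Finset.sum_add_distrib, ← Finset.mul_sum]
      simp
    _ ≤ n * δ + A * (2 * (n / L + 1)) := by
      gcongr
      exact sum_iterate_sub_le h hL hη hz hz1 hψ n

theorem exists_abs_birkhoffSum_sub_le_of_abs_sub_lt (hα : Irrational α)
    (h : Function.Semiconj ψ f (· + α)) (hφ : Continuous φ) (hp : Function.Periodic φ 1) {δ : ℝ}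
    (hδ : 0 < δ) : ∃ η > 0, ∃ K, ∀ z z', |ψ z - ψ z'| < η → ∀ n : ℕ,
      |birkhoffSum f φ n z - birkhoffSum f φ n z'| ≤ δ * n + K := by
  obtain ⟨A, hA0, hA⟩ := exists_abs_sub_le_add_mul_of_periodic one_pos hφ hp (half_pos hδ)
  obtain ⟨L, hL⟩ := exists_nat_gt (4 * A / δ)
  have hL0 : (0 : ℝ) < L := lt_trans (by positivity) hL
  obtain ⟨η, hη0, hη⟩ := exists_pos_le_abs_mul_sub_of_irrational hα L
  refine ⟨min η 1, lt_min hη0 one_pos, 2 * A, fun z z' hzz n => ?_⟩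
  have h_slope : n * (δ / 2) + A * (2 * (n / L + 1)) ≤ δ * n + 2 * A := by
    rw [div_lt_iff₀ hδ] at hL
    have h_ratio : 2 * A / L ≤ δ / 2 := by
      rw [div_le_iff₀ hL0]
      linarith
    calc n * (δ / 2) + A * (2 * (n / L + 1))
      _ = n * (δ / 2) + 2 * A / L * n + 2 * A := by ring
      _ ≤ n * (δ / 2) + δ / 2 * n + 2 * A := by gcongr
      _ = δ * n + 2 * A := by ring
  refine le_trans ?_ h_slope
  have h_ordered {z z' : ℝ} (hz : z ≤ z') (hψ : ψ z' - ψ z < min η 1) :=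
    abs_birkhoffSum_sub_le_of_le h hA0.le hA (by exact_mod_cast hL0) (min_le_right _ _)
      (fun k hk hkL m => (min_le_left _ _).trans (hη k hk hkL m)) hz hψ n
  rcases le_total z z' with hz | hz
  · rw [abs_sub_comm]
    exact h_ordered hz (by linarith [neg_le_abs (ψ z - ψ z')])
  · exact h_ordered hz ((le_abs_self _).trans_lt hzz)

theorem abs_birkhoffSum_iterate_sub_le {β : Type*} {F : β → β} {θ : β → ℝ} {C : ℝ}
    (hC : ∀ x, |θ x| ≤ C) (m n : ℕ) (x : β) :
    |birkhoffSum F θ n (F^[m] x) - birkhoffSum F θ n x| ≤ 2 * m * C := by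
  have h_bound (y : β) : |birkhoffSum F θ m y| ≤ m * C := by
    refine (Finset.abs_sum_le_sum_abs _ _).trans ?_
    simpa using Finset.sum_le_card_nsmul (Finset.range m) _ C fun i _ => hC (F^[i] y)
  have h_swap : birkhoffSum F θ n (F^[m] x) - birkhoffSum F θ n x =
      birkhoffSum F θ m (F^[n] x) - birkhoffSum F θ m x := by
    linarith [birkhoffSum_add F θ m n x, birkhoffSum_add F θ n m x,
      congrArg (birkhoffSum F θ · x) (add_comm m n)]
  rw [h_swap]
  linarith [abs_sub (birkhoffSum F θ m (F^[n] x)) (birkhoffSum F θ m x), h_bound x,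
    h_bound (F^[n] x)]

theorem birkhoffSum_add_int (f : CircleDeg1Lift) (hp : Function.Periodic φ 1) (n : ℕ) (x : ℝ)
    (p : ℤ) : birkhoffSum f φ n (x + p) = birkhoffSum f φ n x :=
  Finset.sum_congr rfl fun i _ => by
    rw [← CircleDeg1Lift.coe_pow, CircleDeg1Lift.map_add_int]
    simpa using hp.int_mul p ((f ^ i) x)

theorem exists_abs_birkhoffSum_sub_le_of_semiconj (hα : Irrational α)
    (h : Function.Semiconj ψ f (· + α)) (hφ : Continuous φ) (hp : Function.Periodic φ 1) {δ : ℝ}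
    (hδ : 0 < δ) : ∃ K, ∀ (n : ℕ) (x y : ℝ),
      |birkhoffSum f φ n x - birkhoffSum f φ n y| ≤ δ * n + K := by
  obtain ⟨C, hC0, hC⟩ := exists_abs_le_of_periodic one_ne_zero hφ hp
  obtain ⟨η, hη, K, hK⟩ := exists_abs_birkhoffSum_sub_le_of_abs_sub_lt hα h hφ hp hδ
  obtain ⟨M, hM⟩ := exists_forall_exists_abs_mul_sub_lt_of_irrational hα hη
  refine ⟨K + 2 * M * C, fun n x y => ?_⟩
  obtain ⟨m, hmM, p, hmp⟩ := hM (ψ x - ψ y)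
  have h_close : |ψ x - ψ (f^[m] y + p)| < η := by
    rw [ψ.map_add_int, semiconj_translation_iterate h, abs_sub_comm]
    convert hmp using 2
    ring
  have h_near := hK _ _ h_close n
  rw [birkhoffSum_add_int f hp] at h_near
  calc |birkhoffSum f φ n x - birkhoffSum f φ n y|
    _ ≤ |birkhoffSum f φ n x - birkhoffSum f φ n (f^[m] y)|
        + |birkhoffSum f φ n (f^[m] y) - birkhoffSum f φ n y| := abs_sub_le _ _ _
    _ ≤ (δ * n + K) + 2 * m * C := add_le_add h_near (abs_birkhoffSum_iterate_sub_le hC m n y)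
    _ ≤ δ * n + (K + 2 * M * C) := by
      rw [add_assoc]
      gcongr

end BirkhoffSum

end Rotation

section ExpWeight

variable {η : ℝ}

/-- The two-sided weight `exp (-η |j|)`, summable over `ℤ` and nearly invariant under a shift
when `η > 0` is small. -/
noncomputable def expWeight (η : ℝ) (j : ℤ) : ℝ := Real.exp (-η * |(j : ℝ)|)

theorem expWeight_pos (η : ℝ) (j : ℤ) : 0 < expWeight η j := Real.exp_pos _

theorem expWeight_add_mul_exp (a b : ℝ) (j : ℤ) :
    expWeight (a + b) j * Real.exp (b * |(j : ℝ)|) = expWeight a j := by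
  rw [expWeight, expWeight, ← Real.exp_add]
  ring_nf

theorem expWeight_le_exp_mul (hη : 0 ≤ η) {i j : ℤ} (hij : |i - j| ≤ 1) :
    expWeight η i ≤ Real.exp η * expWeight η j := by
  rw [expWeight, expWeight, ← Real.exp_add, Real.exp_le_exp]
  have h_cast : |(i : ℝ) - j| ≤ 1 := by exact_mod_cast hij
  have h_tri : |(j : ℝ)| - |(i : ℝ)| ≤ 1 := by
    rw [abs_sub_comm] at h_cast
    exact (abs_sub_abs_le_abs_sub _ _).trans h_cast
  nlinarith [mul_le_mul_of_nonneg_left h_tri hη]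

theorem summable_expWeight (hη : 0 < η) : Summable (expWeight η) := by
  have h_nat : Summable fun n : ℕ => Real.exp (n * -η) :=
    Real.summable_exp_nat_mul_iff.2 (neg_neg_of_pos hη)
  refine Summable.of_nat_of_neg (h_nat.congr fun n => ?_) (h_nat.congr fun n => ?_) <;>
    simp [expWeight, mul_comm]

theorem one_le_tsum_expWeight (hη : 0 < η) : 1 ≤ ∑' j, expWeight η j := by
  simpa [expWeight] using
    (summable_expWeight hη).le_tsum 0 fun j _ => (expWeight_pos η j).le

theorem tsum_expWeight_mul_succ_mem_Icc (hη : 0 ≤ η) {u : ℤ → ℝ} (hu : ∀ j, 0 ≤ u j)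
    (hs : Summable fun j => expWeight η j * u j) :
    ∑' j, expWeight η j * u (j + 1) ∈
      Icc (Real.exp (-η) * ∑' j, expWeight η j * u j) (Real.exp η * ∑' j, expWeight η j * u j) := by
  have h_shift := (Equiv.addRight (1 : ℤ)).summable_iff.2 hs
  have h_shift_eq := (Equiv.addRight (1 : ℤ)).tsum_eq fun j => expWeight η j * u j
  simp only [Function.comp_def, Equiv.coe_addRight] at h_shift h_shift_eq
  have h_upper (j : ℤ) :
      expWeight η j * u (j + 1) ≤ Real.exp η * (expWeight η (j + 1) * u (j + 1)) := by
    rw [← mul_assoc]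
    exact mul_le_mul_of_nonneg_right (expWeight_le_exp_mul hη (by simp)) (hu _)
  have h_lower (j : ℤ) :
      Real.exp (-η) * (expWeight η (j + 1) * u (j + 1)) ≤ expWeight η j * u (j + 1) := by
    rw [← mul_assoc, Real.exp_neg]
    refine mul_le_mul_of_nonneg_right ?_ (hu _)
    exact (inv_mul_le_iff₀ (Real.exp_pos η)).2 (expWeight_le_exp_mul hη (by simp))
  have h_summable : Summable fun j => expWeight η j * u (j + 1) :=
    .of_nonneg_of_le (fun j => mul_nonneg (expWeight_pos η j).le (hu _)) h_upper
      (h_shift.mul_left _)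
  rw [← h_shift_eq, ← tsum_mul_left, ← tsum_mul_left]
  exact ⟨(h_shift.mul_left _).tsum_le_tsum h_lower h_summable,
    h_summable.tsum_le_tsum h_upper (h_shift.mul_left _)⟩

end ExpWeight

theorem abs_sub_le_exp_sub_one_mul {η c d : ℝ} (hd : 0 ≤ d)
    (hc : c ∈ Icc (Real.exp (-η) * d) (Real.exp η * d)) : |c - d| ≤ (Real.exp η - 1) * d := by
  have h_symm : 1 - Real.exp (-η) ≤ Real.exp η - 1 := by
    linarith [Real.add_one_le_exp η, Real.add_one_le_exp (-η)]
  rw [abs_le]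
  constructor <;> linarith [hc.1, hc.2, mul_le_mul_of_nonneg_right h_symm hd]

theorem tendstoUniformlyOn_tsum_of_dominated {ι β X : Type*} {l : Filter ι} {s : Set X}
    {F : ι → β → X → ℝ} {G : β → X → ℝ} {B : β → ℝ} (hB : Summable B)
    (hF : ∀ j, TendstoUniformlyOn (fun i => F i j) (G j) l s)
    (hFB : ∀ i j, ∀ x ∈ s, |F i j x| ≤ B j) (hGB : ∀ j, ∀ x ∈ s, |G j x| ≤ B j) :
    TendstoUniformlyOn (fun i x => ∑' j, F i j x) (fun x => ∑' j, G j x) l s := by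
  simp only [tendstoUniformlyOn_iff_tendsto, uniformity_eq_comap_nhds_zero, tendsto_comap_iff,
    Function.comp_def] at hF ⊢
  have h_mem : ∀ᶠ p : ι × X in l ×ˢ 𝓟 s, p.2 ∈ s :=
    tendsto_snd.eventually (mem_principal_self s)
  have h_tsum := tendsto_tsum_of_dominated_convergence (hB.mul_left 2) hF <|
    h_mem.mono fun p hp j => (abs_sub _ _).trans (by linarith [hFB p.1 j p.2 hp, hGB j p.2 hp])
  simp only [tsum_zero] at h_tsum
  refine h_tsum.congr' (h_mem.mono fun p hp => ?_)
  have h_summable (u : β → X → ℝ) (hu : ∀ j, |u j p.2| ≤ B j) : Summable fun j => u j p.2 :=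
    .of_norm_bounded hB hu
  exact (h_summable (F p.1) fun j => hFB p.1 j p.2 hp).tsum_sub
    (h_summable G fun j => hGB j p.2 hp)

namespace CircleDiffeo

section Group

instance : CoeFun CircleDiffeo (fun _ => ℝ → ℝ) := ⟨toFun⟩

@[ext]
theorem ext {a b : CircleDiffeo} (h : ∀ x, a x = b x) : a = b := by
  obtain ⟨F, _, _, _⟩ := a
  obtain ⟨G, _, _, _⟩ := b
  obtain rfl : F = G := funext h
  rfl

/-- The derivative of the lift. Keeping the bundled map as the argument makes `(a * b).D` the
derivative of a composition, where `deriv (a * b)` could be read as that of a pointwise product. -/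
noncomputable def D (a : CircleDiffeo) : ℝ → ℝ := deriv a

theorem D_pos (a : CircleDiffeo) (x : ℝ) : 0 < a.D x := a.deriv_pos x

theorem hasDerivAt (a : CircleDiffeo) (x : ℝ) : HasDerivAt a (a.D x) x :=
  (a.contDiff.differentiable one_ne_zero x).hasDerivAt

theorem continuous (a : CircleDiffeo) : Continuous a := a.contDiff.continuous

theorem continuous_D (a : CircleDiffeo) : Continuous a.D :=
  (contDiff_one_iff_deriv.1 a.contDiff).2

theorem strictMono (a : CircleDiffeo) : StrictMono a := strictMono_of_deriv_pos a.deriv_pos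

/-- The underlying monotone degree one map, giving access to the theory of translation numbers. -/
def toLift (a : CircleDiffeo) : CircleDeg1Lift :=
  ⟨⟨a, a.strictMono.monotone⟩, a.commute_translation⟩

theorem surjective (a : CircleDiffeo) : Function.Surjective a :=
  a.toLift.continuous_iff_surjective.1 a.continuous

theorem map_add_int (a : CircleDiffeo) (x : ℝ) (m : ℤ) : a (x + m) = a x + m :=
  a.toLift.map_add_int x m

theorem uniformContinuous (a : CircleDiffeo) : UniformContinuous a :=
  uniformContinuous_deg1Lift (ψ := a.toLift) a.continuous

theorem periodic_D (a : CircleDiffeo) : Function.Periodic a.D 1 := fun x => by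
  have h : HasDerivAt a (a.D (x + 1)) x := by
    simpa [a.commute_translation] using ((a.hasDerivAt (x + 1)).comp_add_const x 1).sub_const 1
  exact h.unique (a.hasDerivAt x)

theorem uniformContinuous_D (a : CircleDiffeo) : UniformContinuous a.D :=
  uniformContinuous_of_periodic one_pos a.continuous_D a.periodic_D

theorem intervalIntegral_D (a : CircleDiffeo) (x y : ℝ) : ∫ t in x..y, a.D t = a y - a x :=
  intervalIntegral.integral_eq_sub_of_hasDerivAt (fun t _ => a.hasDerivAt t)
    (a.continuous_D.intervalIntegrable _ _)

theorem exists_D_eq_one (a : CircleDiffeo) : ∃ x, a.D x = 1 := by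
  obtain ⟨x, -, hx⟩ := exists_hasDerivAt_eq_slope a a.D zero_lt_one a.continuous.continuousOn
    fun x _ => a.hasDerivAt x
  have h := a.commute_translation 0
  rw [zero_add] at h
  exact ⟨x, by rw [hx, h]; ring⟩

/-- The circle diffeomorphism with lift `F`, from a continuous positive derivative `F'`. -/
noncomputable def ofHasDerivAt (F F' : ℝ → ℝ) (hF : ∀ x, HasDerivAt F (F' x) x)
    (hc : Continuous F') (hpos : ∀ x, 0 < F' x) (hadd : ∀ x, F (x + 1) = F x + 1) :
    CircleDiffeo where
  toFun := F
  contDiff := contDiff_one_iff_deriv.2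
    ⟨fun x => (hF x).differentiableAt, by rwa [funext fun x => (hF x).deriv]⟩
  deriv_pos x := by rw [(hF x).deriv]; exact hpos x
  commute_translation := hadd

/-- The homeomorphism of the line given by the lift. -/
noncomputable def toHomeomorph (a : CircleDiffeo) : ℝ ≃ₜ ℝ :=
  (StrictMono.orderIsoOfSurjective a a.strictMono a.surjective).toHomeomorph

theorem hasDerivAt_toHomeomorph_symm (a : CircleDiffeo) (x : ℝ) :
    HasDerivAt a.toHomeomorph.symm (a.D (a.toHomeomorph.symm x))⁻¹ x :=
  (a.hasDerivAt _).of_local_left_inverse a.toHomeomorph.symm.continuous.continuousAt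
    (a.D_pos _).ne' (Eventually.of_forall a.toHomeomorph.apply_symm_apply)

/-- Lifts of circle diffeomorphisms form a group under composition. -/
noncomputable instance : Group CircleDiffeo where
  mul a b := ofHasDerivAt (fun x => a (b x)) (fun x => a.D (b x) * b.D x)
    (fun x => (a.hasDerivAt (b x)).comp x (b.hasDerivAt x))
    ((a.continuous_D.comp b.continuous).mul b.continuous_D)
    (fun x => mul_pos (a.D_pos _) (b.D_pos _))
    (fun x => by rw [b.commute_translation, a.commute_translation])
  one := ofHasDerivAt id 1 hasDerivAt_id continuous_const (fun _ => one_pos) (fun _ => rfl)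
  inv a := ofHasDerivAt a.toHomeomorph.symm _ a.hasDerivAt_toHomeomorph_symm
    ((a.continuous_D.comp a.toHomeomorph.symm.continuous).inv₀ fun _ => (a.D_pos _).ne')
    (fun _ => inv_pos.2 (a.D_pos _))
    (fun x => a.toHomeomorph.symm_apply_eq.2 <|
      ((a.commute_translation _).trans
        (congrArg (· + 1) (a.toHomeomorph.apply_symm_apply x))).symm)
  mul_assoc _ _ _ := ext fun _ => rfl
  one_mul _ := ext fun _ => rfl
  mul_one _ := ext fun _ => rfl
  inv_mul_cancel a := ext a.toHomeomorph.symm_apply_apply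

theorem mul_apply (a b : CircleDiffeo) (x : ℝ) : (a * b) x = a (b x) := rfl

theorem inv_apply_self (a : CircleDiffeo) (x : ℝ) : a⁻¹ (a x) = x :=
  a.toHomeomorph.symm_apply_apply x

theorem apply_inv_self (a : CircleDiffeo) (x : ℝ) : a (a⁻¹ x) = x :=
  a.toHomeomorph.apply_symm_apply x

theorem coe_pow (a : CircleDiffeo) : ∀ n : ℕ, ⇑(a ^ n) = a^[n]
  | 0 => rfl
  | n + 1 => by
    rw [Function.iterate_succ, ← coe_pow a n, pow_succ]
    rfl

theorem D_mul (a b : CircleDiffeo) (x : ℝ) : (a * b).D x = a.D (b x) * b.D x :=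
  ((a.hasDerivAt (b x)).comp x (b.hasDerivAt x)).deriv

theorem D_one (x : ℝ) : (1 : CircleDiffeo).D x = 1 := (hasDerivAt_id x).deriv

theorem D_inv (a : CircleDiffeo) (x : ℝ) : a⁻¹.D (a x) = (a.D x)⁻¹ :=
  eq_inv_of_mul_eq_one_left <| by rw [← D_mul, inv_mul_cancel, D_one]

theorem log_D_pow (a : CircleDiffeo) (n : ℕ) (x : ℝ) :
    Real.log ((a ^ n).D x) = birkhoffSum a (fun y => Real.log (a.D y)) n x := by
  induction n with
  | zero => simp [D_one]
  | succ n ih =>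
    rw [pow_succ', D_mul, Real.log_mul (a.D_pos _).ne' ((a ^ n).D_pos _).ne', ih,
      birkhoffSum_succ, coe_pow, add_comm]

theorem continuous_log_D (a : CircleDiffeo) : Continuous fun x => Real.log (a.D x) :=
  a.continuous_D.log fun x => (a.D_pos x).ne'

theorem periodic_log_D (a : CircleDiffeo) : Function.Periodic (fun x => Real.log (a.D x)) 1 :=
  a.periodic_D.comp Real.log

end Group

section Growth

variable {f g : CircleDiffeo} {α : ℝ}

theorem bijective_toLift (a : CircleDiffeo) : Function.Bijective a.toLift :=
  ⟨a.strictMono.injective, a.surjective⟩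

theorem translationNumber_toLift (hf : hasRotationNumber f α) :
    f.toLift.translationNumber = α :=
  f.toLift.translationNumber_eq_of_tendsto₀ hf

theorem exists_semiconj_translation (hf : hasRotationNumber f α) :
    ∃ ψ : CircleDeg1Lift, Function.Semiconj ψ f (· + α) := by
  let R : CircleDeg1Liftˣ := CircleDeg1Lift.translate (Multiplicative.ofAdd α)
  obtain ⟨ψ, hψ⟩ := CircleDeg1Lift.semiconj_of_bijective_of_translationNumber_eq f.bijective_toLift
    (CircleDeg1Lift.isUnit_iff_bijective.1 R.isUnit)
    ((translationNumber_toLift hf).trans (CircleDeg1Lift.translationNumber_translate α).symm)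
  exact ⟨ψ, fun x => (hψ x).trans (add_comm _ _)⟩

theorem exists_abs_log_D_pow_le (hα : Irrational α) (hf : hasRotationNumber f α) {δ : ℝ}
    (hδ : 0 < δ) : ∃ K, ∀ (n : ℕ) (x : ℝ), |Real.log ((f ^ n).D x)| ≤ δ * n + K := by
  obtain ⟨ψ, hψ⟩ := exists_semiconj_translation hf
  obtain ⟨K, hK⟩ := exists_abs_birkhoffSum_sub_le_of_semiconj (f := f.toLift) hα hψ
    f.continuous_log_D f.periodic_log_D hδ
  refine ⟨K, fun n x => ?_⟩
  obtain ⟨y, hy⟩ := (f ^ n).exists_D_eq_one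
  have h_diff : |birkhoffSum f _ n x - birkhoffSum f _ n y| ≤ δ * n + K := hK n x y
  rwa [← log_D_pow, ← log_D_pow, hy, Real.log_one, sub_zero] at h_diff

/-- The derivatives of the iterates of `f`, forwards and backwards, grow slower than any
exponential, uniformly on the circle. -/
def HasSubexponentialGrowth (f : CircleDiffeo) : Prop :=
  ∀ δ > 0, ∃ K, ∀ (j : ℤ) (x : ℝ), (f ^ j).D x ≤ K * Real.exp (δ * |(j : ℝ)|)

theorem hasSubexponentialGrowth (hα : Irrational α) (hf : hasRotationNumber f α) :
    HasSubexponentialGrowth f := by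
  intro δ hδ
  obtain ⟨K, hK⟩ := exists_abs_log_D_pow_le hα hf hδ
  refine ⟨Real.exp K, fun j x => ?_⟩
  rw [← Real.exp_add, ← Real.log_le_iff_le_exp (D_pos _ _), add_comm]
  obtain ⟨n, rfl | rfl⟩ := j.eq_nat_or_neg
  · simpa using (le_abs_self _).trans (hK n x)
  · obtain ⟨y, rfl⟩ := (f ^ n).surjective x
    simpa [D_inv] using (neg_le_abs _).trans (hK n y)

end Growth

section Semiconjugacy

variable {f g : CircleDiffeo} {ψ : CircleDeg1Lift} {α : ℝ}

theorem exists_continuous_semiconj (hf : hasRotationNumber f α) (hg : hasRotationNumber g α)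
    (hgd : DenseOrbits g) : ∃ ψ : CircleDeg1Lift, Continuous ψ ∧ Function.Semiconj ψ f g := by
  obtain ⟨ψ, hψ⟩ := CircleDeg1Lift.semiconj_of_bijective_of_translationNumber_eq f.bijective_toLift
    g.bijective_toLift ((translationNumber_toLift hf).trans (translationNumber_toLift hg).symm)
  refine ⟨ψ, ψ.monotone.continuous_of_denseRange ((hgd (ψ 0)).mono ?_), hψ⟩
  rintro z ⟨n, hn⟩
  obtain ⟨p, hp⟩ := Int.fract_eq_zero_iff.1 hn
  have h_orbit : ψ (f^[n] 0) = g^[n] (ψ 0) := hψ.iterate_right n 0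
  exact ⟨f^[n] 0 - p, by rw [ψ.map_sub_int, h_orbit, hp, sub_sub_cancel]⟩

theorem semiconj_zpow (h : Function.Semiconj ψ f g) (j : ℤ) :
    Function.Semiconj ψ ⇑(f ^ j) ⇑(g ^ j) := by
  have h_pow (n : ℕ) : Function.Semiconj ψ ⇑(f ^ n) ⇑(g ^ n) := by
    simpa only [coe_pow] using h.iterate_right n
  obtain ⟨n, rfl | rfl⟩ := j.eq_nat_or_neg
  · simpa only [zpow_natCast] using h_pow n
  · simpa only [zpow_neg, zpow_natCast] using
      (h_pow n).inverses_right (apply_inv_self (f ^ n)) (inv_apply_self (g ^ n))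

theorem exists_forall_abs_sub_deg1Lift_le_of_strictMono (hψ : Continuous ψ) (hm : StrictMono ψ)
    {η : ℝ} (hη : 0 < η) : ∃ k : CircleDiffeo, ∀ x, |k x - ψ x| ≤ η := by
  obtain ⟨r, hr, hu⟩ := Metric.uniformContinuous_iff.1 (uniformContinuous_deg1Lift hψ) η hη
  have h_prim (x : ℝ) : HasDerivAt (fun u => ∫ t in 0..u, ψ t) (ψ x) x :=
    (hψ.integral_hasStrictDerivAt 0 x).hasDerivAt
  have h_avg (x : ℝ) : (∫ t in 0..x + r, ψ t) - ∫ t in 0..x, ψ t = ∫ t in x..x + r, ψ t :=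
    intervalIntegral.integral_interval_sub_left (hψ.intervalIntegrable _ _)
      (hψ.intervalIntegrable _ _)
  let k := ofHasDerivAt (fun x => ((∫ t in 0..x + r, ψ t) - ∫ t in 0..x, ψ t) / r)
    (fun x => (ψ (x + r) - ψ x) / r)
    (fun x => (((h_prim (x + r)).comp_add_const x r).sub (h_prim x)).div_const r)
    (by fun_prop)
    (fun x => div_pos (sub_pos.2 (hm (by linarith))) hr)
    (fun x => by
      rw [h_avg, h_avg, show x + 1 + r = x + r + 1 by ring,
        ← intervalIntegral.integral_comp_add_right ψ 1]
      simp only [ψ.map_add_one]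
      rw [intervalIntegral.integral_add (hψ.intervalIntegrable _ _) (by simp)]
      simp only [intervalIntegral.integral_const, smul_eq_mul, mul_one]
      field_simp
      ring)
  refine ⟨k, fun x => ?_⟩
  obtain ⟨c, hc, hkc⟩ := exists_hasDerivAt_eq_slope (fun u => ∫ t in 0..u, ψ t) ψ
    (lt_add_of_pos_right x hr) (fun u _ => (h_prim u).continuousAt.continuousWithinAt)
    fun u _ => h_prim u
  have h_value : k x = ψ c := by rw [hkc, add_sub_cancel_left]; rfl
  rw [h_value]
  refine (hu (a := c) (b := x) ?_).le
  rw [Real.dist_eq, abs_lt]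
  constructor <;> linarith [hc.1, hc.2]

-- Adding a small multiple of the identity makes `ψ` strictly monotone, so that its moving averages
-- are diffeomorphisms.
theorem exists_forall_abs_sub_deg1Lift_le (hψ : Continuous ψ) {η : ℝ} (hη : 0 < η) :
    ∃ k : CircleDiffeo, ∀ x, |k x - ψ x| ≤ η := by
  obtain ⟨C, hC0, hC⟩ := exists_abs_le_of_periodic one_ne_zero (hψ.sub continuous_id)
    (periodic_deg1Lift_sub_self ψ)
  obtain ⟨θ, ⟨hθ0, hθ1⟩, hθ⟩ : ∃ θ ∈ Ioo (0 : ℝ) 1, θ * C ≤ η / 2 := by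
    have h_pos : 0 < η / 2 / C := by positivity
    obtain ⟨θ, h0, h1⟩ := exists_between (lt_min h_pos one_pos)
    exact ⟨θ, ⟨h0, h1.trans_le (min_le_right _ _)⟩,
      (le_div_iff₀ hC0).1 (h1.le.trans (min_le_left _ _))⟩
  have h_tilt_mono : StrictMono fun x => (1 - θ) * ψ x + θ * x :=
    (ψ.monotone.const_mul (sub_nonneg.2 hθ1.le)).add_strictMono (strictMono_id.const_mul hθ0)
  let tilt : CircleDeg1Lift := ⟨⟨fun x => (1 - θ) * ψ x + θ * x, h_tilt_mono.monotone⟩,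
    fun x => by simp only [ψ.map_add_one]; ring⟩
  have h_tilt : Continuous tilt := (hψ.const_mul _).add (continuous_id.const_mul θ)
  obtain ⟨k, hk⟩ := exists_forall_abs_sub_deg1Lift_le_of_strictMono h_tilt h_tilt_mono (half_pos hη)
  refine ⟨k, fun x => ?_⟩
  calc |k x - ψ x|
    _ ≤ |k x - tilt x| + |tilt x - ψ x| := abs_sub_le _ _ _
    _ = |k x - tilt x| + θ * |ψ x - x| := by
      rw [show tilt x - ψ x = -(θ * (ψ x - x)) by change (1 - θ) * ψ x + θ * x - ψ x = _; ring,
        abs_neg, abs_mul, abs_of_pos hθ0]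
    _ ≤ η / 2 + θ * C := by
      gcongr
      exacts [hk x, hC x]
    _ ≤ η := by linarith

theorem exists_tendstoUniformly_deg1Lift (hψ : Continuous ψ) :
    ∃ k : ℕ → CircleDiffeo, TendstoUniformly (fun n x => k n x) ψ atTop := by
  choose k hk using fun n : ℕ => exists_forall_abs_sub_deg1Lift_le hψ
    (Nat.one_div_pos_of_nat (α := ℝ))
  refine ⟨fun n => k n, Metric.tendstoUniformly_iff.2 fun ε hε => ?_⟩
  filter_upwards [tendsto_one_div_add_atTop_nhds_zero_nat.eventually_lt_const hε] with n hn x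
  rw [dist_comm]
  exact (hk n x).trans_lt hn

end Semiconjugacy

section Density

/-- The circle diffeomorphism with value `c` at `0` and derivative proportional to `q`. -/
noncomputable def ofDensity (q : ℝ → ℝ) (hc : Continuous q) (hpos : ∀ x, 0 < q x)
    (hp : Function.Periodic q 1) (c : ℝ) : CircleDiffeo :=
  have h_total : 0 < ∫ t in (0 : ℝ)..1, q t :=
    intervalIntegral.intervalIntegral_pos_of_pos (hc.intervalIntegrable _ _) hpos one_pos
  ofHasDerivAt (fun x => c + (∫ t in 0..x, q t) / ∫ t in (0 : ℝ)..1, q t)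
    (fun x => q x / ∫ t in (0 : ℝ)..1, q t)
    (fun x => ((hc.integral_hasStrictDerivAt 0 x).hasDerivAt.div_const _).const_add c)
    (hc.div_const _) (fun x => div_pos (hpos x) h_total)
    (fun x => by
      rw [← intervalIntegral.integral_add_adjacent_intervals (hc.intervalIntegrable 0 x)
        (hc.intervalIntegrable x (x + 1)), hp.intervalIntegral_add_eq x 0, zero_add, add_div,
        div_self h_total.ne', add_assoc])

variable {q : ℝ → ℝ} (hc : Continuous q) (hpos : ∀ x, 0 < q x) (hp : Function.Periodic q 1)
  {ψ : CircleDeg1Lift}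

theorem D_ofDensity (c x : ℝ) :
    (ofDensity q hc hpos hp c).D x = q x / ∫ t in (0 : ℝ)..1, q t :=
  (((hc.integral_hasStrictDerivAt 0 x).hasDerivAt.div_const _).const_add c).deriv

theorem abs_ofDensity_sub_le {S τ : ℝ} (hS : 1 ≤ S) (hτ : τ ≤ 1 / 2)
    (h : ∀ x ∈ Icc (0 : ℝ) 1, |(∫ t in 0..x, q t) - S * (ψ x - ψ 0)| ≤ τ) (x : ℝ) :
    |ofDensity q hc hpos hp (ψ 0) x - ψ x| ≤ 4 * τ := by
  refine abs_deg1Lift_sub_le_of_forall_Icc (φ := (ofDensity q hc hpos hp (ψ 0)).toLift)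
    (fun x hx => ?_) x
  have hu : ψ x - ψ 0 ∈ Icc (0 : ℝ) 1 := deg1Lift_sub_mem_Icc ψ hx.1 (by linarith [hx.2])
  have hHx := h x hx
  have h_total := h 1 (right_mem_Icc.2 zero_le_one)
  have h_one : ψ 1 - ψ 0 = 1 := by linarith [ψ.map_add_one 0, congrArg ψ (zero_add (1 : ℝ))]
  rw [h_one, mul_one] at h_total
  change |ψ 0 + (∫ t in 0..x, q t) / (∫ t in (0 : ℝ)..1, q t) - ψ x| ≤ 4 * τ
  set H := ∫ t in 0..x, q t
  set Z := ∫ t in (0 : ℝ)..1, q t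
  set u := ψ x - ψ 0
  have hZ : 1 / 2 ≤ Z := by linarith [neg_le_of_abs_le h_total]
  have hZ0 : 0 < Z := by linarith
  have h_split : ψ 0 + H / Z - ψ x = ((H - S * u) - u * (Z - S)) / Z := by
    field_simp
    ring
  rw [h_split, abs_div, abs_of_pos hZ0, div_le_iff₀ hZ0]
  calc |(H - S * u) - u * (Z - S)|
    _ ≤ |H - S * u| + |u| * |Z - S| := (abs_sub _ _).trans_eq (by rw [abs_mul])
    _ ≤ τ + 1 * τ := by
      gcongr
      exact (abs_of_nonneg hu.1).trans_le hu.2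
    _ ≤ 4 * τ * Z := by nlinarith [(abs_nonneg _).trans h_total]

end Density

section Transport

variable {f g k : CircleDiffeo} {ψ : CircleDeg1Lift}

/-- The derivative of `g⁻ʲ ∘ k ∘ fʲ`, with the point `k (fʲ x)` at which `g⁻ʲ` is differentiated
moved to `ψ (fʲ x)`: this makes the cocycle relation `transportDensity_apply_mul_D` exact, at the
price that the primitive is only approximately `g⁻ʲ ∘ k ∘ fʲ` when `k` is near `ψ`. -/
noncomputable def transportDensity (f g : CircleDiffeo) (ψ : CircleDeg1Lift) (k : CircleDiffeo)
    (j : ℤ) (x : ℝ) : ℝ :=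
  (g ^ (-j)).D (ψ ((f ^ j) x)) * (k * f ^ j).D x

theorem transportDensity_pos (j : ℤ) (x : ℝ) : 0 < transportDensity f g ψ k j x :=
  mul_pos (D_pos _ _) (D_pos _ _)

theorem continuous_transportDensity (hψ : Continuous ψ) (j : ℤ) :
    Continuous (transportDensity f g ψ k j) :=
  ((continuous_D _).comp (hψ.comp (f ^ j).continuous)).mul (continuous_D _)

theorem periodic_transportDensity (j : ℤ) :
    Function.Periodic (transportDensity f g ψ k j) 1 := fun x => by
  simp only [transportDensity, (f ^ j).commute_translation, ψ.map_add_one, periodic_D _ _]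

theorem transportDensity_apply_mul_D (h : Function.Semiconj ψ f g) (j : ℤ) (x : ℝ) :
    transportDensity f g ψ k j (f x) * f.D x =
      g.D (ψ x) * transportDensity f g ψ k (j + 1) x := by
  have h_point : (f ^ j) (f x) = (f ^ (j + 1)) x := by rw [zpow_add_one, mul_apply]
  have h_right : (k * f ^ (j + 1)).D x = (k * f ^ j).D (f x) * f.D x := by
    rw [← D_mul, zpow_add_one, mul_assoc]
  have h_left : (g ^ (-j)).D (ψ ((f ^ (j + 1)) x)) =
      g.D (ψ x) * (g ^ (-(j + 1))).D (ψ ((f ^ (j + 1)) x)) := by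
    have h_back : (g ^ (-(j + 1))) (ψ ((f ^ (j + 1)) x)) = ψ x := by
      rw [(semiconj_zpow h (j + 1)).eq, zpow_neg, inv_apply_self]
    rw [show g ^ (-j) = g * g ^ (-(j + 1)) by group, D_mul, h_back]
  rw [transportDensity, transportDensity, h_point, h_left, h_right]
  ring

theorem integral_transportDensity_mem_Icc (hψ : Continuous ψ) {j : ℤ} {B : ℝ}
    (hB : ∀ y, (g ^ (-j)).D y ≤ B) {x : ℝ} (hx : x ∈ Icc (0 : ℝ) 1) :
    ∫ t in 0..x, transportDensity f g ψ k j t ∈ Icc 0 B := by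
  refine ⟨intervalIntegral.integral_nonneg hx.1 fun t _ => (transportDensity_pos j t).le, ?_⟩
  have hB0 : 0 ≤ B := (D_pos _ _).le.trans (hB 0)
  calc ∫ t in 0..x, transportDensity f g ψ k j t
    _ ≤ ∫ t in 0..x, B * (k * f ^ j).D t :=
      intervalIntegral.integral_mono_on hx.1
        ((continuous_transportDensity hψ j).intervalIntegrable _ _)
        (((continuous_D _).const_mul B).intervalIntegrable _ _)
        fun t _ => mul_le_mul_of_nonneg_right (hB _) (D_pos _ _).le
    _ = B * ((k * f ^ j) x - (k * f ^ j) 0) := by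
      rw [intervalIntegral.integral_const_mul, intervalIntegral_D]
    _ ≤ B := mul_le_of_le_one_right hB0
      (deg1Lift_sub_mem_Icc (k * f ^ j).toLift hx.1 (by linarith [hx.2])).2

theorem abs_integral_transportDensity_sub_le (hψ : Continuous ψ) {j : ℤ} {ε : ℝ}
    (hk : ∀ y, |(g ^ (-j)).D (k y) - (g ^ (-j)).D (ψ y)| ≤ ε) {x : ℝ}
    (hx : x ∈ Icc (0 : ℝ) 1) :
    |(∫ t in 0..x, transportDensity f g ψ k j t) -
      ((g ^ (-j) * (k * f ^ j)) x - (g ^ (-j) * (k * f ^ j)) 0)| ≤ ε := by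
  set p := k * f ^ j
  have hε : 0 ≤ ε := (abs_nonneg _).trans (hk 0)
  have h_pointwise (t : ℝ) :
      ‖transportDensity f g ψ k j t - (g ^ (-j) * p).D t‖ ≤ ε * p.D t := by
    change ‖(g ^ (-j)).D (ψ ((f ^ j) t)) * p.D t - _‖ ≤ _
    rw [D_mul (g ^ (-j)) p, ← sub_mul, norm_mul, Real.norm_of_nonneg (p.D_pos t).le, norm_sub_rev]
    exact mul_le_mul_of_nonneg_right (hk _) (p.D_pos t).le
  calc |(∫ t in 0..x, transportDensity f g ψ k j t) - ((g ^ (-j) * p) x - (g ^ (-j) * p) 0)|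
    _ = ‖∫ t in 0..x, (transportDensity f g ψ k j t - (g ^ (-j) * p).D t)‖ := by
      rw [intervalIntegral.integral_sub
        ((continuous_transportDensity hψ j).intervalIntegrable _ _)
        ((continuous_D _).intervalIntegrable _ _), intervalIntegral_D, Real.norm_eq_abs]
    _ ≤ ∫ t in 0..x, ε * p.D t :=
      intervalIntegral.norm_integral_le_of_norm_le hx.1 (Eventually.of_forall fun t _ =>
        h_pointwise t) ((p.continuous_D.const_mul ε).intervalIntegrable _ _)
    _ = ε * (p x - p 0) := by
      rw [intervalIntegral.integral_const_mul, intervalIntegral_D]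
    _ ≤ ε := mul_le_of_le_one_right hε
      (deg1Lift_sub_mem_Icc p.toLift hx.1 (by linarith [hx.2])).2

theorem tendstoUniformlyOn_integral_transportDensity (hψ : Continuous ψ)
    (h : Function.Semiconj ψ f g) {ι : Type*} {l : Filter ι} {k : ι → CircleDiffeo}
    (hk : TendstoUniformly (fun i x => k i x) ψ l) (j : ℤ) :
    TendstoUniformlyOn (fun i x => ∫ t in 0..x, transportDensity f g ψ (k i) j t)
      (fun x => ψ x - ψ 0) l (Icc 0 1) := by
  refine Metric.tendstoUniformlyOn_iff.2 fun ε hε => ?_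
  have h_map := Metric.tendstoUniformly_iff.1
    ((g ^ (-j)).uniformContinuous.comp_tendstoUniformly hk) (ε / 4) (by positivity)
  have h_deriv := Metric.tendstoUniformly_iff.1
    ((g ^ (-j)).uniformContinuous_D.comp_tendstoUniformly hk) (ε / 4) (by positivity)
  filter_upwards [h_map, h_deriv] with i hi hDi x hx
  have h_int := abs_integral_transportDensity_sub_le (f := f) (k := k i) hψ (j := j) (ε := ε / 4)
    (fun y => by rw [abs_sub_comm]; exact (hDi y).le) hx
  have h_close (y : ℝ) : |ψ y - (g ^ (-j) * (k i * f ^ j)) y| < ε / 4 := by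
    have h_back : (g ^ (-j)) (ψ ((f ^ j) y)) = ψ y := by
      rw [(semiconj_zpow h j).eq, zpow_neg, inv_apply_self]
    rw [← Real.dist_eq, ← h_back]
    exact hi ((f ^ j) y)
  rw [Real.dist_eq, abs_lt]
  rw [abs_le] at h_int
  have h0 := abs_lt.1 (h_close 0)
  have hx := abs_lt.1 (h_close x)
  constructor <;> linarith [h_int.1, h_int.2, h0.1, h0.2, hx.1, hx.2]

end Transport

section Averaging

variable {f g k : CircleDiffeo} {ψ : CircleDeg1Lift} {η : ℝ}

theorem exists_summable_expWeight_mul_D_le (hη : 0 < η) (hg : HasSubexponentialGrowth g) :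
    ∃ B : ℤ → ℝ, Summable B ∧ ∀ j x, expWeight η j * (g ^ (-j)).D x ≤ B j := by
  obtain ⟨K, hK⟩ := hg (η / 2) (half_pos hη)
  refine ⟨_, (summable_expWeight (half_pos hη)).mul_left K, fun j x => ?_⟩
  calc expWeight η j * (g ^ (-j)).D x
    _ ≤ expWeight η j * (K * Real.exp (η / 2 * |(j : ℝ)|)) := by
      have h_growth := hK (-j) x
      rw [Int.cast_neg, abs_neg] at h_growth
      exact mul_le_mul_of_nonneg_left h_growth (expWeight_pos η j).le
    _ = K * expWeight (η / 2) j := by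
      rw [← expWeight_add_mul_exp (η / 2) (η / 2), add_halves]
      ring

theorem exists_summable_expWeight_mul_transportDensity_le (hη : 0 < η)
    (hf : HasSubexponentialGrowth f) (hg : HasSubexponentialGrowth g) (k : CircleDiffeo) :
    ∃ B : ℤ → ℝ, Summable B ∧ ∀ j x, expWeight η j * transportDensity f g ψ k j x ≤ B j := by
  obtain ⟨M, hM0, hM⟩ := exists_abs_le_of_periodic one_ne_zero k.continuous_D k.periodic_D
  obtain ⟨K, hK⟩ := hf (η / 2) (half_pos hη)
  obtain ⟨B, hB, hBg⟩ := exists_summable_expWeight_mul_D_le (half_pos hη) hg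
  refine ⟨_, hB.mul_left (M * K), fun j x => ?_⟩
  have hK0 : 0 ≤ K := by simpa using (D_pos _ _).le.trans (hK 0 0)
  calc expWeight η j * transportDensity f g ψ k j x
    _ = expWeight η j * (g ^ (-j)).D (ψ ((f ^ j) x)) * (k.D ((f ^ j) x) * (f ^ j).D x) := by
      rw [transportDensity, D_mul, mul_assoc]
    _ ≤ expWeight η j * (g ^ (-j)).D (ψ ((f ^ j) x)) *
        (M * (K * Real.exp (η / 2 * |(j : ℝ)|))) := by
      gcongr
      · exact mul_nonneg (expWeight_pos η j).le (D_pos _ _).le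
      · exact (D_pos _ _).le
      · exact (le_abs_self _).trans (hM _)
      · exact hK j x
    _ = M * K * (expWeight (η / 2) j * (g ^ (-j)).D (ψ ((f ^ j) x))) := by
      rw [← expWeight_add_mul_exp (η / 2) (η / 2), add_halves]
      ring
    _ ≤ M * K * B j := mul_le_mul_of_nonneg_left (hBg j _) (mul_nonneg hM0.le hK0)

/-- The exponentially weighted sum of the `transportDensity` over all `j : ℤ`: a density whose
normalized primitive almost conjugates `f` to `g` in the `C¹` sense when `η` is small. -/
noncomputable def averagedDensity (η : ℝ) (f g : CircleDiffeo) (ψ : CircleDeg1Lift)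
    (k : CircleDiffeo) (x : ℝ) : ℝ :=
  ∑' j, expWeight η j * transportDensity f g ψ k j x

theorem expWeight_mul_transportDensity_pos (j : ℤ) (x : ℝ) :
    0 < expWeight η j * transportDensity f g ψ k j x :=
  mul_pos (expWeight_pos η j) (transportDensity_pos j x)

theorem summable_expWeight_mul_transportDensity (hη : 0 < η) (hf : HasSubexponentialGrowth f)
    (hg : HasSubexponentialGrowth g) (x : ℝ) :
    Summable fun j => expWeight η j * transportDensity f g ψ k j x := by
  obtain ⟨B, hB, hBk⟩ := exists_summable_expWeight_mul_transportDensity_le (ψ := ψ) hη hf hg k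
  exact .of_nonneg_of_le (fun j => (expWeight_mul_transportDensity_pos j x).le)
    (fun j => hBk j x) hB

theorem averagedDensity_pos (hη : 0 < η) (hf : HasSubexponentialGrowth f)
    (hg : HasSubexponentialGrowth g) (x : ℝ) : 0 < averagedDensity η f g ψ k x :=
  (summable_expWeight_mul_transportDensity hη hf hg x).tsum_pos
    (fun j => (expWeight_mul_transportDensity_pos j x).le) 0
    (expWeight_mul_transportDensity_pos 0 x)

theorem continuous_averagedDensity (hη : 0 < η) (hf : HasSubexponentialGrowth f)
    (hg : HasSubexponentialGrowth g) (hψ : Continuous ψ) :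
    Continuous (averagedDensity η f g ψ k) := by
  obtain ⟨B, hB, hBk⟩ := exists_summable_expWeight_mul_transportDensity_le (ψ := ψ) hη hf hg k
  refine continuous_tsum (fun j => (continuous_transportDensity hψ j).const_mul _) hB fun j x => ?_
  rw [Real.norm_of_nonneg (expWeight_mul_transportDensity_pos j x).le]
  exact hBk j x

theorem periodic_averagedDensity : Function.Periodic (averagedDensity η f g ψ k) 1 := fun x => by
  simp only [averagedDensity, periodic_transportDensity _ x]

theorem averagedDensity_apply_mul_D_mem_Icc (hη : 0 < η) (hf : HasSubexponentialGrowth f)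
    (hg : HasSubexponentialGrowth g) (h : Function.Semiconj ψ f g) (x : ℝ) :
    averagedDensity η f g ψ k (f x) * f.D x ∈
      Icc (Real.exp (-η) * (g.D (ψ x) * averagedDensity η f g ψ k x))
        (Real.exp η * (g.D (ψ x) * averagedDensity η f g ψ k x)) := by
  have h_shift : averagedDensity η f g ψ k (f x) * f.D x =
      g.D (ψ x) * ∑' j, expWeight η j * transportDensity f g ψ k (j + 1) x := by
    rw [averagedDensity, ← tsum_mul_right, ← tsum_mul_left]
    refine tsum_congr fun j => ?_
    rw [mul_assoc, transportDensity_apply_mul_D h, mul_left_comm]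
  obtain ⟨h_lower, h_upper⟩ := tsum_expWeight_mul_succ_mem_Icc hη.le
    (fun j => (transportDensity_pos j x).le)
    (summable_expWeight_mul_transportDensity (k := k) (ψ := ψ) hη hf hg x)
  rw [h_shift, averagedDensity, mul_left_comm, mul_left_comm (Real.exp η)]
  exact ⟨mul_le_mul_of_nonneg_left h_lower (g.D_pos _).le,
    mul_le_mul_of_nonneg_left h_upper (g.D_pos _).le⟩

theorem integral_averagedDensity (hη : 0 < η) (hf : HasSubexponentialGrowth f)
    (hg : HasSubexponentialGrowth g) (hψ : Continuous ψ) (x : ℝ) :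
    ∫ t in 0..x, averagedDensity η f g ψ k t =
      ∑' j, expWeight η j * ∫ t in 0..x, transportDensity f g ψ k j t := by
  obtain ⟨B, hB, hBk⟩ := exists_summable_expWeight_mul_transportDensity_le (ψ := ψ) hη hf hg k
  have h_sum := intervalIntegral.hasSum_integral_of_dominated_convergence (a := 0) (b := x)
    (μ := MeasureTheory.volume) (fun j _ => B j)
    (fun j => ((continuous_transportDensity (f := f) (g := g) (k := k) hψ j).const_mul
      (expWeight η j)).aestronglyMeasurable)
    (fun j => Eventually.of_forall fun t _ => by
      rw [Real.norm_of_nonneg (expWeight_mul_transportDensity_pos j t).le]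
      exact hBk j t)
    (Eventually.of_forall fun _ _ => hB) intervalIntegrable_const
    (Eventually.of_forall fun t _ =>
      (summable_expWeight_mul_transportDensity hη hf hg t).hasSum)
  simp only [intervalIntegral.integral_const_mul] at h_sum
  exact h_sum.tsum_eq.symm

theorem tendstoUniformlyOn_integral_averagedDensity (hη : 0 < η)
    (hf : HasSubexponentialGrowth f) (hg : HasSubexponentialGrowth g) (hψ : Continuous ψ)
    (h : Function.Semiconj ψ f g) {ι : Type*} {l : Filter ι} {k : ι → CircleDiffeo}
    (hk : TendstoUniformly (fun i x => k i x) ψ l) :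
    TendstoUniformlyOn (fun i x => ∫ t in 0..x, averagedDensity η f g ψ (k i) t)
      (fun x => (∑' j, expWeight η j) * (ψ x - ψ 0)) l (Icc 0 1) := by
  obtain ⟨B, hB, hBg⟩ := exists_summable_expWeight_mul_D_le hη hg
  have h_nonneg (j : ℤ) : 0 ≤ B j :=
    (mul_pos (expWeight_pos η j) ((g ^ (-j)).D_pos 0)).le.trans (hBg j 0)
  simp only [integral_averagedDensity hη hf hg hψ, ← tsum_mul_right]
  refine tendstoUniformlyOn_tsum_of_dominated (hB.add (summable_expWeight hη))
    (fun j => ?_) (fun i j x hx => ?_) (fun j x hx => ?_)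
  · exact (uniformContinuous_const_smul (expWeight η j)).comp_tendstoUniformlyOn
      (tendstoUniformlyOn_integral_transportDensity hψ h hk j)
  · obtain ⟨h_lower, h_upper⟩ := integral_transportDensity_mem_Icc (f := f) (k := k i) hψ
      (fun y => (le_div_iff₀' (expWeight_pos η j)).2 (hBg j y)) hx
    rw [abs_of_nonneg (mul_nonneg (expWeight_pos η j).le h_lower)]
    have h_le := (le_div_iff₀' (expWeight_pos η j)).1 h_upper
    linarith [expWeight_pos η j]
  · obtain ⟨h_lower, h_upper⟩ := deg1Lift_sub_mem_Icc ψ hx.1 (by linarith [hx.2])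
    rw [abs_of_nonneg (mul_nonneg (expWeight_pos η j).le h_lower)]
    linarith [h_nonneg j, mul_le_of_le_one_right (expWeight_pos η j).le h_upper]

theorem exists_close_forall_D_apply_mul_D_mem_Icc (hη : 0 < η) (hf : HasSubexponentialGrowth f)
    (hg : HasSubexponentialGrowth g) (hψ : Continuous ψ) (h : Function.Semiconj ψ f g) :
    ∃ k : CircleDiffeo, (∀ x, |k x - ψ x| ≤ η) ∧ ∀ x, k.D (f x) * f.D x ∈
      Icc (Real.exp (-η) * (g.D (ψ x) * k.D x)) (Real.exp η * (g.D (ψ x) * k.D x)) := by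
  obtain ⟨k, hk⟩ := exists_tendstoUniformly_deg1Lift hψ
  have hτ : 0 < min (1 / 2) (η / 4) := by positivity
  obtain ⟨n, hn⟩ := (Metric.tendstoUniformlyOn_iff.1
    (tendstoUniformlyOn_integral_averagedDensity hη hf hg hψ h hk) _ hτ).exists
  have hc := continuous_averagedDensity (k := k n) hη hf hg hψ
  have hpos := averagedDensity_pos (k := k n) (ψ := ψ) hη hf hg
  have hp := periodic_averagedDensity (η := η) (f := f) (g := g) (k := k n) (ψ := ψ)
  refine ⟨ofDensity _ hc hpos hp (ψ 0), fun x => ?_, fun x => ?_⟩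
  · have h_close := abs_ofDensity_sub_le hc hpos hp (one_le_tsum_expWeight hη)
      (min_le_left _ _) (fun y hy => by
        rw [abs_sub_comm]
        exact (hn y hy).le) x
    linarith [min_le_right (1 / 2) (η / 4)]
  · obtain ⟨h_lower, h_upper⟩ := averagedDensity_apply_mul_D_mem_Icc (k := k n) hη hf hg h x
    have h_total : 0 < ∫ t in (0 : ℝ)..1, averagedDensity η f g ψ (k n) t :=
      intervalIntegral.intervalIntegral_pos_of_pos (hc.intervalIntegrable _ _) hpos one_pos
    simp only [D_ofDensity, div_mul_eq_mul_div, ← mul_div_assoc]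
    exact ⟨by gcongr, by gcongr⟩

end Averaging

section Closeness

variable {f g : CircleDiffeo} {ψ : CircleDeg1Lift}

theorem distC1_nonneg (F G : ℝ → ℝ) : 0 ≤ distC1 F G :=
  add_nonneg (Real.iSup_nonneg fun _ => abs_nonneg _) (Real.iSup_nonneg fun _ => abs_nonneg _)

theorem distC1_le_add {a b : CircleDiffeo} {A B : ℝ} (h : ∀ x, |a x - b x| ≤ A)
    (hD : ∀ x, |a.D x - b.D x| ≤ B) : distC1 a b ≤ A + B :=
  have : Nonempty (Icc (0 : ℝ) 1) := ⟨0, by simp⟩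
  add_le_add (ciSup_le fun x => h x) (ciSup_le fun x => hD x)

theorem abs_conj_sub_le {k : CircleDiffeo} {A B : ℝ} (h : Function.Semiconj ψ f g)
    (hk : ∀ x, |k x - ψ x| ≤ A) (hg : ∀ x, |g (k x) - g (ψ x)| ≤ B) (y : ℝ) :
    |(k * f * k⁻¹) y - g y| ≤ A + B := by
  obtain ⟨x, rfl⟩ := k.surjective y
  rw [mul_apply, inv_apply_self, mul_apply, ← sub_add_sub_cancel _ (g (ψ x)), ← h.eq]
  refine (abs_add_le _ _).trans (add_le_add (hk _) ?_)
  rw [h.eq, abs_sub_comm]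
  exact hg x

theorem D_conj_apply_mem_Icc {k : CircleDiffeo} {x c d e : ℝ}
    (h : k.D (f x) * f.D x ∈ Icc (c * (e * k.D x)) (d * (e * k.D x))) :
    (k * f * k⁻¹).D (k x) ∈ Icc (c * e) (d * e) := by
  have h_chain : (k * f * k⁻¹).D (k x) * k.D x = k.D (f x) * f.D x := by
    rw [← D_mul, inv_mul_cancel_right, D_mul]
  rw [← h_chain, ← mul_assoc, ← mul_assoc] at h
  exact ⟨le_of_mul_le_mul_right h.1 (k.D_pos x), le_of_mul_le_mul_right h.2 (k.D_pos x)⟩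

theorem exists_distC1_conj_le (hf : HasSubexponentialGrowth f) (hg : HasSubexponentialGrowth g)
    (hψ : Continuous ψ) (h : Function.Semiconj ψ f g) {ε : ℝ} (hε : 0 < ε) :
    ∃ k : CircleDiffeo, distC1 ⇑(k * f * k⁻¹) g ≤ ε := by
  obtain ⟨C, -, hC⟩ := exists_abs_le_of_periodic one_ne_zero g.continuous_D g.periodic_D
  obtain ⟨r, hr, hgr⟩ := Metric.uniformContinuous_iff.1 g.uniformContinuous (ε / 4) (by positivity)
  obtain ⟨s, hs, hgs⟩ :=
    Metric.uniformContinuous_iff.1 g.uniformContinuous_D (ε / 4) (by positivity)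
  have h_exp : ∀ᶠ η in nhds (0 : ℝ), (Real.exp η - 1) * C < ε / 4 := by
    have h_cont : Continuous fun η => (Real.exp η - 1) * C := by fun_prop
    exact h_cont.continuousAt.eventually_lt_const (by simpa using hε)
  have h_lt {c : ℝ} (hc : 0 < c) : ∀ᶠ η in nhds (0 : ℝ), η < c := eventually_lt_nhds hc
  obtain ⟨η, ⟨hηC, hηr, hηs, hηε⟩, hη : 0 < η⟩ := (((h_exp.and ((h_lt hr).and ((h_lt hs).and
    (h_lt (by positivity : 0 < ε / 4))))).filter_mono nhdsWithin_le_nhds).and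
      (self_mem_nhdsWithin (a := (0 : ℝ)) (s := Ioi 0))).exists
  obtain ⟨k, hk, hkD⟩ := exists_close_forall_D_apply_mul_D_mem_Icc hη hf hg hψ h
  have h_map (y : ℝ) : |(k * f * k⁻¹) y - g y| ≤ ε / 4 + ε / 4 :=
    abs_conj_sub_le h (fun x => (hk x).trans hηε.le)
      (fun x => (hgr ((hk x).trans_lt hηr)).le) y
  have h_deriv (y : ℝ) : |(k * f * k⁻¹).D y - g.D y| ≤ ε / 4 + ε / 4 := by
    obtain ⟨x, rfl⟩ := k.surjective y
    refine (abs_sub_le _ (g.D (ψ x)) _).trans (add_le_add ?_ ?_)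
    · have h_abs := abs_sub_le_exp_sub_one_mul (g.D_pos (ψ x)).le (D_conj_apply_mem_Icc (hkD x))
      have h_bound : (Real.exp η - 1) * g.D (ψ x) ≤ (Real.exp η - 1) * C :=
        mul_le_mul_of_nonneg_left ((le_abs_self _).trans (hC _))
          (sub_nonneg.2 (Real.one_le_exp hη.le))
      linarith
    · rw [abs_sub_comm]
      exact (hgs ((hk x).trans_lt hηs)).le
  exact ⟨k, by linarith [distC1_le_add h_map h_deriv]⟩

end Closeness

end CircleDiffeo

open CircleDiffeo in
theorem conjugates_converge_general {α : ℝ} (hα : Irrational α) (f g : CircleDiffeo)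
    (hf : hasRotationNumber f α) (hg : hasRotationNumber g α) (hgd : DenseOrbits g.toFun) :
    ∃ h fh : ℕ → CircleDiffeo,
      (∀ m : ℕ, ∀ x : ℝ, (fh m).toFun ((h m).toFun x) = (h m).toFun (f.toFun x)) ∧
      Tendsto (fun m : ℕ => distC1 (fh m).toFun g.toFun) atTop (nhds 0) := by
  obtain ⟨ψ, hψ, h_semiconj⟩ := exists_continuous_semiconj hf hg hgd
  choose k hk using fun m : ℕ => exists_distC1_conj_le (hasSubexponentialGrowth hα hf)
    (hasSubexponentialGrowth hα hg) hψ h_semiconj (Nat.one_div_pos_of_nat (n := m) (α := ℝ))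
  refine ⟨k, fun m => k m * f * (k m)⁻¹, fun m x => ?_, ?_⟩
  · rw [mul_apply, inv_apply_self, mul_apply]
  · exact squeeze_zero (fun m => distC1_nonneg _ _) hk tendsto_one_div_add_atTop_nhds_zero_nat

/-- **Theorem.** Let `f` and `g` be `C¹`-diffeomorphisms of `S¹` with the same irrational
rotation number `α`, both with dense orbits. If for every `ε > 0` there are `g̃`
`ε`-`C¹`-close to `g`, an integer `n` and adapted orbit segments of `f` and `g̃` of
length `n` which are similarly ordered and have the same initial and final ratios,
then there are diffeomorphisms `hₘ` with `hₘ ∘ f ∘ hₘ⁻¹ → g` in the `C¹` topology. -/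
theorem conjugates_converge (α : ℝ) (hα : Irrational α) (f g : CircleDiffeo)
    (hf : hasRotationNumber f α) (hg : hasRotationNumber g α)
    (hfd : DenseOrbits f.toFun) (hgd : DenseOrbits g.toFun)
    (hyp : ∀ ε : ℝ, 0 < ε → ∃ gt : CircleDiffeo, distC1 gt.toFun g.toFun < ε ∧
      ∃ (n : ℕ) (x y : ℝ) (i j i' j' : ℕ),
        IsAdaptedSeg f.toFun x n i j ∧ IsAdaptedSeg gt.toFun y n i' j' ∧
        SimilarlyOrdered (fun k => f.toFun^[k] x) (fun k => gt.toFun^[k] y) n ∧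
        initialRatio f.toFun x n i j = initialRatio gt.toFun y n i' j' ∧
        finalRatio f.toFun x n i j = finalRatio gt.toFun y n i' j') :
    ∃ h fh : ℕ → CircleDiffeo,
      (∀ m : ℕ, ∀ x : ℝ, (fh m).toFun ((h m).toFun x) = (h m).toFun (f.toFun x)) ∧
      Tendsto (fun m : ℕ => distC1 (fh m).toFun g.toFun) atTop (nhds 0) :=
  conjugates_converge_general hα f g hf hg hgd
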